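/- The ground state has zero energy: (1/2) ∫_ℝ Q'(x)^2 dx − (1/6) ∫_ℝ Q(x)^6 dx = 0, i.e. E(Q) = 0. -/

import Mathlib

open Real MeasureTheory

/-!
Write `c = cosh (2x)` and `s = sinh (2x)`. From `Q ^ 2 = √3 / c` and `Q' = -(s / c) Q`, the energy
density is
`Q' ^ 2 / 2 - Q ^ 6 / 6 = (√3 / 2) (s ^ 2 - 1) / c ^ 3`,
and `(s / c ^ 2)' = -2 (s ^ 2 - 1) / c ^ 3` because `c ^ 2 = s ^ 2 + 1`. So the density is
`-√3 / 4` times the derivative of `s / c ^ 2`, and its integral vanishes. All functions involved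
are dominated by multiples of `1 / c`, hence integrable since `c ≥ 1 + x ^ 2`.
-/

/-- The soliton profile `Q(x) = (3 / cosh(2x)^2)^(1/4)`. -/
noncomputable def Q (x : ℝ) : ℝ := (3 / Real.cosh (2 * x) ^ 2) ^ ((1 : ℝ) / 4)

theorem Q_sq (x : ℝ) : Q x ^ 2 = √3 / cosh (2 * x) := by
  have hc := cosh_pos (2 * x)
  rw [Q, ← rpow_natCast, ← rpow_mul (by positivity)]
  norm_num
  rw [← sqrt_eq_rpow, sqrt_div (by norm_num),
    sqrt_sq hc.le]

theorem hasDerivAt_Q (x : ℝ) :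
    HasDerivAt Q (-(sinh (2 * x) / cosh (2 * x)) * Q x) x := by
  have hc := cosh_pos (2 * x)
  have h2 : HasDerivAt (fun y : ℝ => 2 * y) 2 x := by
    simpa using (hasDerivAt_id x).const_mul 2
  have hg := (hasDerivAt_const x (3 : ℝ)).div (h2.cosh.pow 2) (pow_pos hc 2).ne'
  have hpos : 0 < 3 / cosh (2 * x) ^ 2 := by positivity
  refine (hg.rpow_const (p := 1 / 4) (Or.inl hpos.ne')).congr_deriv ?_
  simp only [Pi.div_apply, Pi.pow_apply]
  rw [rpow_sub_one hpos.ne', Q]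
  field_simp
  ring

theorem integrable_inv_cosh : Integrable (fun x : ℝ => (cosh (2 * x))⁻¹) := by
  refine integrable_inv_one_add_sq.mono' (Continuous.aestronglyMeasurable ?_) (.of_forall ?_)
  · exact (by fun_prop : Continuous fun x : ℝ => cosh (2 * x)).inv₀ fun x => (cosh_pos _).ne'
  · intro x
    have hx : x ^ 2 ≤ sinh x ^ 2 := by
      rcases le_total 0 x with h | h
      · exact pow_le_pow_left₀ h (self_le_sinh_iff.2 h) 2
      · nlinarith [sinh_le_self_iff.2 h]
    rw [norm_of_nonneg (by have := cosh_pos (2 * x); positivity)]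
    refine inv_anti₀ (by positivity) ?_
    rw [cosh_two_mul, cosh_sq]
    nlinarith [sq_nonneg x]

/-- The hypothesis `|F| ≤ cosh (2x) ^ 2` makes `1 / cosh (2x)` an integrable majorant. -/
theorem integrable_div_cosh_cube {F : ℝ → ℝ} (hF : Continuous F)
    (hb : ∀ x, |F x| ≤ cosh (2 * x) ^ 2) :
    Integrable (fun x : ℝ => F x / cosh (2 * x) ^ 3) := by
  refine integrable_inv_cosh.mono' (Continuous.aestronglyMeasurable ?_) (.of_forall ?_)
  · exact hF.div (by fun_prop) fun x => (pow_pos (cosh_pos _) 3).ne'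
  · intro x
    have hc := cosh_pos (2 * x)
    rw [norm_eq_abs, abs_div, abs_of_pos (pow_pos hc 3), div_le_iff₀ (by positivity)]
    refine (hb x).trans_eq ?_
    field_simp

theorem hasDerivAt_sinh_div_cosh_sq (x : ℝ) :
    HasDerivAt (fun y : ℝ => sinh (2 * y) / cosh (2 * y) ^ 2)
      (-2 * (sinh (2 * x) ^ 2 / cosh (2 * x) ^ 3 - 1 / cosh (2 * x) ^ 3)) x := by
  have hc := cosh_pos (2 * x)
  have h2 : HasDerivAt (fun y : ℝ => 2 * y) 2 x := by
    simpa using (hasDerivAt_id x).const_mul 2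
  refine (h2.sinh.div (h2.cosh.pow 2) (pow_pos hc 2).ne').congr_deriv ?_
  simp only [Pi.pow_apply]
  field_simp
  linear_combination cosh (2 * x) * cosh_sq (2 * x)

/-- The ground state has zero energy:
`(1/2) ∫ Q'(x)^2 dx - (1/6) ∫ Q(x)^6 dx = 0`, i.e. `E(Q) = 0`. -/
theorem energy_Q_eq_zero :
    (1 / 2) * (∫ x : ℝ, (deriv Q x) ^ 2) - (1 / 6) * (∫ x : ℝ, Q x ^ 6) = 0 := by
  have hkin : ∀ x, deriv Q x ^ 2 = √3 * (sinh (2 * x) ^ 2 / cosh (2 * x) ^ 3) := by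
    intro x
    have hc := cosh_pos (2 * x)
    rw [(hasDerivAt_Q x).deriv, mul_pow, Q_sq]
    field_simp
  have hpot : ∀ x, Q x ^ 6 = 3 * √3 * (1 / cosh (2 * x) ^ 3) := by
    intro x
    have h3 : √3 ^ 3 = 3 * √3 := by rw [pow_succ, sq_sqrt (by norm_num)]
    rw [show Q x ^ 6 = (Q x ^ 2) ^ 3 by ring, Q_sq, div_pow, h3]
    ring
  have i1 : Integrable fun x : ℝ => sinh (2 * x) ^ 2 / cosh (2 * x) ^ 3 :=
    integrable_div_cosh_cube (by fun_prop) fun x => by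
      rw [abs_of_nonneg (sq_nonneg _), cosh_sq]; linarith
  have i2 : Integrable fun x : ℝ => 1 / cosh (2 * x) ^ 3 :=
    integrable_div_cosh_cube continuous_const fun x => by
      rw [abs_one, cosh_sq]; nlinarith [sq_nonneg (sinh (2 * x))]
  have i3 : Integrable fun x : ℝ => sinh (2 * x) / cosh (2 * x) ^ 2 := by
    have h := integrable_div_cosh_cube (F := fun x => sinh (2 * x) * cosh (2 * x))
      (by fun_prop) fun x => by
        rw [abs_le]
        constructor <;>
          nlinarith [cosh_sq (2 * x), sq_nonneg (sinh (2 * x) + cosh (2 * x)),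
            sq_nonneg (sinh (2 * x) - cosh (2 * x))]
    refine h.congr (.of_forall fun x => ?_)
    have hc := cosh_pos (2 * x)
    simp only
    field_simp
  have key := integral_eq_zero_of_hasDerivAt_of_integrable hasDerivAt_sinh_div_cosh_sq
    ((i1.sub i2).const_mul (-2)) i3
  rw [integral_const_mul, integral_sub i1 i2] at key
  simp only [hkin, hpot]
  rw [integral_const_mul, integral_const_mul]
  linear_combination (-√3 / 4) * key
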